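/- (Fisher-type inequality) Define ū(βJ, βb) = liminf_{N→∞} E[⟨U_N⟩_{βJ,βb}]/N, where ⟨·⟩_{βJ,βb} is the Gibbs expectation for the Hamiltonian J·U_N − b Σ_j S_j^x at inverse temperature β. Then for all β > 0, J > 0, b ≥ 0 and every a > 0, ū(βJ, βb) + a^{−1}·ln(cosh(βb)) ≥ ū(βJ + a, 0), where ū(βJ + a, 0) is the corresponding zero-field quantity at coupling parameter βJ + a. -/

import Mathlib

open Matrix MeasureTheory ProbabilityTheory

noncomputable section

abbrev Conf (N : ℕ) := Fin N → Fin 2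

def Sz (N : ℕ) (j : Fin N) : Matrix (Conf N) (Conf N) ℂ :=
  Matrix.diagonal fun σ => if σ j = 0 then 1 else -1

def Sx (N : ℕ) (j : Fin N) : Matrix (Conf N) (Conf N) ℂ :=
  Matrix.of fun σ τ => if τ = Function.update σ j (1 - σ j) then 1 else 0

def UN (N : ℕ) (g : Fin N → Fin N → ℝ) : Matrix (Conf N) (Conf N) ℂ :=
  (-(1 / Real.sqrt N)) • ∑ j : Fin N, ∑ k : Fin N,
    if j < k then g j k • (Sz N j * Sz N k) else 0

def HN (N : ℕ) (J b : ℝ) (g : Fin N → Fin N → ℝ) : Matrix (Conf N) (Conf N) ℂ :=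
  J • UN N g - b • ∑ j : Fin N, Sx N j

/-- Gibbs expectation (real part of the trace ratio). -/
def gibbs {n : Type*} [Fintype n] [DecidableEq n] (β : ℝ) (H A : Matrix n n ℂ) : ℝ :=
  ((NormedSpace.exp ((-β) • H) * A).trace / (NormedSpace.exp ((-β) • H)).trace).re

/-- `ū(c, d) = liminf_N E[⟨U_N⟩_{c,d}]/N`, where `⟨·⟩_{c,d}` is the Gibbs expectation
for `c·U_N − d·Σ_j S_j^x` (i.e. with parameters `c = βJ` and `d = βb`). -/
def ubar {Ω : Type*} [MeasurableSpace Ω] (μ : Measure Ω)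
    (g : (N : ℕ) → Ω → Fin N → Fin N → ℝ) (c d : ℝ) : ℝ :=
  Filter.liminf
    (fun N : ℕ => (∫ ω, gibbs 1 (HN N c d (g N ω)) (UN N (g N ω)) ∂μ) / N)
    Filter.atTop

/-!
Moving the coupling from `c` to `c + a` adds `a • U_N` to the Hamiltonian, so by the
Peierls–Bogoliubov inequality `log Tr e^{-H}` drops by at most `a ⟨U_N⟩_{c,d}`. The transverse field
`d` changes the log-partition function only by an amount between `0` (Peierls' inequality, as
`∑ S_j^x` has zero diagonal) and `N log cosh d` (the Golden–Thompson inequality). Using this at `c`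
and at `c + a`, and the convexity of the classical log-partition function in the coupling, the Gibbs
energies at `(c + a, 0)` and `(c, d)` compare for every realization of the disorder, with error
`N a⁻¹ log cosh d`. The same estimates and a sub-Gaussian bound on `E log Z` keep the energy density
bounded in mean, so the comparison passes to the lower limit.
-/

section LieProduct

open Filter NormedSpace Topology

lemma norm_pow_sub_pow_le {𝔸 : Type*} [NormedRing 𝔸] [NormOneClass 𝔸] {x y : 𝔸} {M : ℝ}
    (hM : 1 ≤ M) (hx : ‖x‖ ≤ M) (hy : ‖y‖ ≤ M) (n : ℕ) :
    ‖x ^ n - y ^ n‖ ≤ n * M ^ n * ‖x - y‖ := by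
  induction n with
  | zero => simp
  | succ n ih =>
    have hyn : ‖y ^ n‖ ≤ M ^ (n + 1) :=
      (norm_pow_le y n).trans <| (pow_le_pow_left₀ (norm_nonneg y) hy n).trans <|
        pow_le_pow_right₀ hM n.le_succ
    calc ‖x ^ (n + 1) - y ^ (n + 1)‖
        = ‖(x ^ n - y ^ n) * x + y ^ n * (x - y)‖ := by
          rw [pow_succ, pow_succ, sub_mul, mul_sub, sub_add_sub_cancel]
      _ ≤ ‖x ^ n - y ^ n‖ * ‖x‖ + ‖y ^ n‖ * ‖x - y‖ :=
        (norm_add_le _ _).trans (add_le_add (norm_mul_le _ _) (norm_mul_le _ _))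
      _ ≤ n * M ^ n * ‖x - y‖ * M + M ^ (n + 1) * ‖x - y‖ := by gcongr
      _ = (n + 1 : ℕ) * M ^ (n + 1) * ‖x - y‖ := by push_cast; ring

variable {𝔸 : Type*} [NormedRing 𝔸] [NormedAlgebra ℝ 𝔸] [CompleteSpace 𝔸]

lemma tendsto_smul_exp_mul_exp_sub_exp_add (A B : 𝔸) :
    Tendsto (fun n : ℕ => (n : ℝ) •
      (exp ((n : ℝ)⁻¹ • A) * exp ((n : ℝ)⁻¹ • B) - exp ((n : ℝ)⁻¹ • (A + B)))) atTop (𝓝 0) := by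
  have hderiv : HasDerivAt (fun t : ℝ => exp (t • A) * exp (t • B) - exp (t • (A + B))) 0 0 := by
    refine (((hasDerivAt_exp_smul_const A (0 : ℝ)).mul (hasDerivAt_exp_smul_const B 0)).sub
      (hasDerivAt_exp_smul_const (A + B) 0)).congr_deriv ?_
    simp
  have hinv : Tendsto (fun n : ℕ => (n : ℝ)⁻¹) atTop (𝓝[>] 0) :=
    tendsto_inv_atTop_nhdsGT_zero.comp tendsto_natCast_atTop_atTop
  simpa [Function.comp_def] using hderiv.tendsto_slope_zero_right.comp hinv

variable [NormOneClass 𝔸]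

lemma norm_exp_le_exp_norm (x : 𝔸) : ‖exp x‖ ≤ Real.exp ‖x‖ := by
  have hsum := exp_series_hasSum_exp' (𝕂 := ℝ) ‖x‖
  rw [← Real.exp_eq_exp_ℝ] at hsum
  rw [← (exp_series_hasSum_exp' (𝕂 := ℝ) x).tsum_eq]
  refine tsum_of_norm_bounded hsum fun n => ?_
  rw [norm_smul, norm_inv, Real.norm_natCast, smul_eq_mul]
  gcongr
  exact norm_pow_le x n

theorem tendsto_exp_mul_exp_pow (A B : 𝔸) :
    Tendsto (fun n : ℕ => (exp ((n : ℝ)⁻¹ • A) * exp ((n : ℝ)⁻¹ • B)) ^ n)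
      atTop (𝓝 (exp (A + B))) := by
  let : NormedAlgebra ℚ 𝔸 := NormedAlgebra.restrictScalars ℚ ℝ 𝔸
  rw [← tendsto_sub_nhds_zero_iff]
  have hbound := ((tendsto_smul_exp_mul_exp_sub_exp_add A B).norm.const_mul
    (Real.exp (‖A‖ + ‖B‖)))
  rw [norm_zero, mul_zero] at hbound
  refine squeeze_zero_norm' ?_ hbound
  filter_upwards [eventually_gt_atTop 0] with n hn
  have hn' : (0 : ℝ) < n := Nat.cast_pos.2 hn
  set M := Real.exp ((n : ℝ)⁻¹ * (‖A‖ + ‖B‖))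
  have hnorm (C : 𝔸) : ‖(n : ℝ)⁻¹ • C‖ = (n : ℝ)⁻¹ * ‖C‖ := by
    rw [norm_smul, norm_inv, Real.norm_natCast]
  have hprod : ‖exp ((n : ℝ)⁻¹ • A) * exp ((n : ℝ)⁻¹ • B)‖ ≤ M := by
    calc _ ≤ Real.exp ‖(n : ℝ)⁻¹ • A‖ * Real.exp ‖(n : ℝ)⁻¹ • B‖ :=
          (norm_mul_le _ _).trans (mul_le_mul (norm_exp_le_exp_norm _) (norm_exp_le_exp_norm _)
            (norm_nonneg _) (Real.exp_nonneg _))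
      _ = M := by rw [← Real.exp_add, hnorm, hnorm, ← mul_add]
  have hsum : ‖exp ((n : ℝ)⁻¹ • (A + B))‖ ≤ M := by
    refine (norm_exp_le_exp_norm _).trans (Real.exp_le_exp.2 ?_)
    rw [hnorm]
    gcongr
    exact norm_add_le A B
  have hMn : M ^ n = Real.exp (‖A‖ + ‖B‖) := by
    rw [← Real.exp_nat_mul, mul_inv_cancel_left₀ hn'.ne']
  have hexp : exp (A + B) = exp ((n : ℝ)⁻¹ • (A + B)) ^ n := by
    rw [← NormedSpace.exp_nsmul, ← Nat.cast_smul_eq_nsmul ℝ, smul_inv_smul₀ hn'.ne']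
  rw [hexp, norm_smul, Real.norm_natCast, ← hMn, ← mul_assoc, mul_comm (M ^ n)]
  exact norm_pow_sub_pow_le (Real.one_le_exp (by positivity)) hprod hsum n

end LieProduct

section GoldenThompson

open Filter NormedSpace RCLike Topology
open scoped ComplexOrder

variable {m n 𝕜 : Type*} [Fintype m] [Fintype n] [RCLike 𝕜]

lemma re_trace_conjTranspose (A : Matrix n n 𝕜) : re Aᴴ.trace = re A.trace := by
  rw [trace_conjTranspose, star_def, conj_re]

lemma two_mul_re_trace_mul_le (P : Matrix m n 𝕜) (Q : Matrix n m 𝕜) :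
    2 * re (P * Q).trace ≤ re (P * Pᴴ).trace + re (Q * Qᴴ).trace := by
  have hnonneg : 0 ≤ re ((P - Qᴴ) * (P - Qᴴ)ᴴ).trace :=
    (nonneg_iff.1 (posSemidef_self_mul_conjTranspose (P - Qᴴ)).trace_nonneg).1
  have hexpand : ((P - Qᴴ) * (P - Qᴴ)ᴴ).trace =
      (P * Pᴴ).trace - (P * Q).trace - ((P * Q)ᴴ.trace - (Q * Qᴴ).trace) := by
    rw [trace_mul_comm Q, conjTranspose_mul, ← trace_sub, ← trace_sub, ← trace_sub,
      conjTranspose_sub, conjTranspose_conjTranspose, Matrix.sub_mul, Matrix.mul_sub,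
      Matrix.mul_sub]
  rw [hexpand, map_sub, map_sub, map_sub, re_trace_conjTranspose] at hnonneg
  linarith

variable [DecidableEq n]

lemma trace_mul_pow_comm {R : Type*} [CommSemiring R] (A B : Matrix n n R) (k : ℕ) :
    ((A * B) ^ k).trace = ((B * A) ^ k).trace := by
  cases k with
  | zero => simp only [pow_zero]
  | succ k => rw [pow_succ, ← mul_assoc, mul_pow_mul, trace_mul_comm, ← mul_assoc, ← pow_succ']

lemma trace_mul_conjTranspose_pow_of_isHermitian {P Q : Matrix n n 𝕜} (hP : P.IsHermitian)
    (hQ : Q.IsHermitian) (k : ℕ) :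
    ((P * Q * (P * Q)ᴴ) ^ k).trace = ((P ^ 2 * Q ^ 2) ^ k).trace := by
  rw [conjTranspose_mul, hP.eq, hQ.eq, ← mul_assoc, trace_mul_pow_comm, pow_two, pow_two]
  simp only [mul_assoc]

lemma trace_sq_mul_conjTranspose_pow (A : Matrix n n 𝕜) (k : ℕ) :
    ((A ^ 2 * (A ^ 2)ᴴ) ^ k).trace = ((Aᴴ * A * (A * Aᴴ)) ^ k).trace := by
  rw [pow_two, conjTranspose_mul, ← mul_assoc (A * A), trace_mul_pow_comm]
  simp only [mul_assoc]

-- The two inequalities feed each other: the first at `k` applied to `A = P * Q` gives the second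
-- at `k + 1`, while the second at `k` applied to `Aᴴ * A` and `A * Aᴴ` gives the first at `k + 1`.
lemma re_trace_two_pow_le (k : ℕ) :
    (∀ A : Matrix n n 𝕜, re (A ^ 2 ^ (k + 1)).trace ≤ re ((A * Aᴴ) ^ 2 ^ k).trace) ∧
    (∀ P Q : Matrix n n 𝕜, P.IsHermitian → Q.IsHermitian →
      re ((P * Q) ^ 2 ^ k).trace ≤ re (P ^ 2 ^ k * Q ^ 2 ^ k).trace) := by
  induction k with
  | zero =>
    refine ⟨fun A => ?_, fun P Q _ _ => by simp only [pow_zero, pow_one, le_refl]⟩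
    have := two_mul_re_trace_mul_le A A
    rw [zero_add, pow_one, pow_zero, pow_one, pow_two]
    linarith
  | succ k ih =>
    obtain ⟨hpow, hmul⟩ := ih
    refine ⟨fun A => ?_, fun P Q hP hQ => ?_⟩
    · have hL : (Aᴴ * A).IsHermitian := isHermitian_conjTranspose_mul_self A
      have hR : (A * Aᴴ).IsHermitian := isHermitian_mul_conjTranspose_self A
      have hcauchy := two_mul_re_trace_mul_le ((Aᴴ * A) ^ 2 ^ k) ((A * Aᴴ) ^ 2 ^ k)
      rw [(hL.pow _).eq, (hR.pow _).eq, ← pow_add, ← pow_add, ← two_mul, ← pow_succ',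
        trace_mul_pow_comm Aᴴ A] at hcauchy
      calc re (A ^ 2 ^ (k + 1 + 1)).trace
          = re ((A ^ 2) ^ 2 ^ (k + 1)).trace := by rw [← pow_mul, ← pow_succ']
        _ ≤ re ((A ^ 2 * (A ^ 2)ᴴ) ^ 2 ^ k).trace := hpow (A ^ 2)
        _ = re ((Aᴴ * A * (A * Aᴴ)) ^ 2 ^ k).trace := by rw [trace_sq_mul_conjTranspose_pow]
        _ ≤ re ((Aᴴ * A) ^ 2 ^ k * (A * Aᴴ) ^ 2 ^ k).trace := hmul _ _ hL hR
        _ ≤ re ((A * Aᴴ) ^ 2 ^ (k + 1)).trace := by linarith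
    · calc re ((P * Q) ^ 2 ^ (k + 1)).trace
          ≤ re ((P * Q * (P * Q)ᴴ) ^ 2 ^ k).trace := hpow (P * Q)
        _ = re ((P ^ 2 * Q ^ 2) ^ 2 ^ k).trace := by
          rw [trace_mul_conjTranspose_pow_of_isHermitian hP hQ]
        _ ≤ re ((P ^ 2) ^ 2 ^ k * (Q ^ 2) ^ 2 ^ k).trace := hmul _ _ (hP.pow 2) (hQ.pow 2)
        _ = re (P ^ 2 ^ (k + 1) * Q ^ 2 ^ (k + 1)).trace := by
          rw [← pow_mul, ← pow_mul, ← pow_succ']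

open scoped Matrix.Norms.Operator in
lemma tendsto_exp_mul_exp_pow_matrix (A B : Matrix n n 𝕜) :
    Tendsto (fun k : ℕ => (exp ((k : ℝ)⁻¹ • A) * exp ((k : ℝ)⁻¹ • B)) ^ k)
      atTop (𝓝 (exp (A + B))) := by
  cases isEmpty_or_nonempty n
  · exact tendsto_const_nhds.congr fun k => Subsingleton.elim _ _
  · exact tendsto_exp_mul_exp_pow A B

theorem re_trace_exp_add_le {A B : Matrix n n 𝕜} (hA : A.IsHermitian) (hB : B.IsHermitian) :
    re (exp (A + B)).trace ≤ re (exp A * exp B).trace := by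
  have hlim : Tendsto (fun k : ℕ => re ((exp (((2 ^ k : ℕ) : ℝ)⁻¹ • A) *
      exp (((2 ^ k : ℕ) : ℝ)⁻¹ • B)) ^ 2 ^ k).trace) atTop (𝓝 (re (exp (A + B)).trace)) :=
    (continuous_re.comp (continuous_id.matrix_trace)).continuousAt.tendsto.comp
      ((tendsto_exp_mul_exp_pow_matrix A B).comp (tendsto_pow_atTop_atTop_of_one_lt one_lt_two))
  refine le_of_tendsto' hlim fun k => ?_
  have hroot (C : Matrix n n 𝕜) : exp (((2 ^ k : ℕ) : ℝ)⁻¹ • C) ^ 2 ^ k = exp C := by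
    rw [← Matrix.exp_nsmul, ← Nat.cast_smul_eq_nsmul ℝ, smul_inv_smul₀ (by positivity)]
  have hherm {C : Matrix n n 𝕜} (hC : C.IsHermitian) :
      (exp (((2 ^ k : ℕ) : ℝ)⁻¹ • C)).IsHermitian :=
    (hC.smul (IsSelfAdjoint.all _)).exp
  simpa only [hroot] using (re_trace_two_pow_le k).2 _ _ (hherm hA) (hherm hB)

end GoldenThompson

section Peierls

open NormedSpace RCLike

variable {n 𝕜 : Type*} [DecidableEq n] [RCLike 𝕜]

lemma diagonal_ofReal_isHermitian (d : n → ℝ) : (diagonal fun i => (d i : 𝕜)).IsHermitian :=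
  isHermitian_diagonal_of_self_adjoint _ (funext fun i => conj_ofReal (d i))

variable [Fintype n]

lemma exp_conjStarAlgAut (U : unitary (Matrix n n 𝕜)) (A : Matrix n n 𝕜) :
    exp (Unitary.conjStarAlgAut 𝕜 _ U A) = Unitary.conjStarAlgAut 𝕜 _ U (exp A) :=
  Matrix.exp_units_conj (Unitary.toUnits U) A

lemma trace_conjStarAlgAut (U : unitary (Matrix n n 𝕜)) (A : Matrix n n 𝕜) :
    (Unitary.conjStarAlgAut 𝕜 _ U A).trace = A.trace := by
  rw [Unitary.conjStarAlgAut_apply, trace_mul_cycle, Unitary.coe_star_mul_self, one_mul]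

lemma exp_diagonal_ofReal (d : n → ℝ) :
    exp (diagonal fun i => (d i : 𝕜)) = diagonal fun i => ((Real.exp (d i) : ℝ) : 𝕜) := by
  rw [Matrix.exp_diagonal]
  congr 1 with i
  rw [Pi.coe_exp, Real.exp_eq_exp_ℝ]
  exact (algebraMap_exp_comm (𝔸 := 𝕜) (d i)).symm

lemma exp_eq_cfc {A : Matrix n n 𝕜} (hA : A.IsHermitian) : exp A = hA.cfc Real.exp := by
  conv_lhs => rw [hA.spectral_theorem, exp_conjStarAlgAut]
  exact congrArg _ (exp_diagonal_ofReal hA.eigenvalues)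

lemma cfc_apply_self {A : Matrix n n 𝕜} (hA : A.IsHermitian) (f : ℝ → ℝ) (i : n) :
    hA.cfc f i i =
      ((∑ j, ‖hA.eigenvectorUnitary.1 i j‖ ^ 2 * f (hA.eigenvalues j) : ℝ) : 𝕜) := by
  rw [IsHermitian.cfc, Unitary.conjStarAlgAut_apply, mul_apply, ofReal_sum]
  refine Finset.sum_congr rfl fun j _ => ?_
  rw [mul_diagonal, star_apply, ofReal_mul, ofReal_pow, ← RCLike.mul_conj, star_def,
    Function.comp_apply, Function.comp_apply, mul_right_comm]

lemma sum_norm_sq_row_eq_one (U : unitaryGroup n 𝕜) (i : n) : ∑ j, ‖U.1 i j‖ ^ 2 = 1 := by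
  have h : ∑ j, U.1 i j * star (U.1 i j) = 1 := by
    simpa only [mul_apply, one_apply_eq, star_apply] using
      congrFun₂ (mem_unitaryGroup_iff.1 U.2) i i
  simp only [star_def, RCLike.mul_conj] at h
  exact_mod_cast h

-- Diagonal entries of functions of `A` are averages over the spectrum with the same weights.
lemma exp_re_apply_self_le {A : Matrix n n 𝕜} (hA : A.IsHermitian) (i : n) :
    Real.exp (re (A i i)) ≤ re (exp A i i) := by
  have hself : A i i =
      ((∑ j, ‖hA.eigenvectorUnitary.1 i j‖ ^ 2 * hA.eigenvalues j : ℝ) : 𝕜) := by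
    refine Eq.trans ?_ (cfc_apply_self hA id i)
    rw [IsHermitian.cfc, Function.id_comp, ← hA.spectral_theorem]
  rw [hself, exp_eq_cfc hA, cfc_apply_self, ofReal_re, ofReal_re]
  exact convexOn_exp.map_sum_le (fun j _ => by positivity) (sum_norm_sq_row_eq_one _ i)
    fun j _ => Set.mem_univ _

theorem sum_exp_re_apply_self_le_re_trace_exp {A : Matrix n n 𝕜} (hA : A.IsHermitian) :
    ∑ i, Real.exp (re (A i i)) ≤ re (exp A).trace := by
  rw [trace, map_sum]
  exact Finset.sum_le_sum fun i _ => exp_re_apply_self_le hA i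

lemma re_trace_exp_pos [Nonempty n] {A : Matrix n n 𝕜} (hA : A.IsHermitian) :
    0 < re (exp A).trace :=
  (Finset.sum_pos (fun _ _ => Real.exp_pos _) Finset.univ_nonempty).trans_le
    (sum_exp_re_apply_self_le_re_trace_exp hA)

lemma sum_exp_mul_exp_mean_le {ι : Type*} [Fintype ι] [Nonempty ι] (x y : ι → ℝ) :
    (∑ i, Real.exp (x i)) *
        Real.exp ((∑ i, Real.exp (x i) * y i) / ∑ i, Real.exp (x i)) ≤
      ∑ i, Real.exp (x i + y i) := by
  have hZ : 0 < ∑ i, Real.exp (x i) :=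
    Finset.sum_pos (fun _ _ => Real.exp_pos _) Finset.univ_nonempty
  set Z := ∑ i, Real.exp (x i)
  have h := convexOn_exp.map_sum_le (t := Finset.univ) (w := fun i => Real.exp (x i) / Z) (p := y)
    (fun i _ => by positivity) (by rw [← Finset.sum_div, div_self hZ.ne'])
    fun i _ => Set.mem_univ _
  simp only [smul_eq_mul, div_mul_eq_mul_div, ← Finset.sum_div, ← Real.exp_add] at h
  rwa [mul_comm, ← le_div_iff₀ hZ]

lemma re_trace_exp_diagonal_mul_exp_le [Nonempty n] (d : n → ℝ) {B : Matrix n n 𝕜}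
    (hB : B.IsHermitian) :
    re (exp (diagonal fun i => (d i : 𝕜))).trace *
        Real.exp (re (exp (diagonal fun i => (d i : 𝕜)) * B).trace /
          re (exp (diagonal fun i => (d i : 𝕜))).trace) ≤
      re (exp (diagonal (fun i => (d i : 𝕜)) + B)).trace := by
  have htrace : re (exp (diagonal fun i => (d i : 𝕜))).trace = ∑ i, Real.exp (d i) := by
    rw [exp_diagonal_ofReal, trace_diagonal, ← ofReal_sum, ofReal_re]
  have htrace_mul : re (exp (diagonal fun i => (d i : 𝕜)) * B).trace =
      ∑ i, Real.exp (d i) * re (B i i) := by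
    rw [exp_diagonal_ofReal, trace, map_sum]
    simp only [diag_apply, diagonal_mul, re_ofReal_mul]
  rw [htrace, htrace_mul]
  refine (sum_exp_mul_exp_mean_le _ _).trans ?_
  simpa only [Matrix.add_apply, diagonal_apply_eq, map_add, ofReal_re] using
    sum_exp_re_apply_self_le_re_trace_exp ((diagonal_ofReal_isHermitian d).add hB)

theorem re_trace_exp_mul_exp_le_re_trace_exp_add [Nonempty n] {A B : Matrix n n 𝕜}
    (hA : A.IsHermitian) (hB : B.IsHermitian) :
    re (exp A).trace * Real.exp (re (exp A * B).trace / re (exp A).trace) ≤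
      re (exp (A + B)).trace := by
  set φ := Unitary.conjStarAlgAut 𝕜 (Matrix n n 𝕜) hA.eigenvectorUnitary
  set Λ : Matrix n n 𝕜 := diagonal fun i => (hA.eigenvalues i : 𝕜)
  set W := φ.symm B
  have hAφ : φ Λ = A := hA.spectral_theorem.symm
  have hBφ : φ W = B := φ.apply_symm_apply B
  have hexp : exp A = φ (exp Λ) := by rw [← exp_conjStarAlgAut, hAφ]
  have htrace : (exp A).trace = (exp Λ).trace := by rw [hexp, trace_conjStarAlgAut]
  have htrace_mul : (exp A * B).trace = (exp Λ * W).trace := by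
    rw [hexp, ← hBφ, ← map_mul, trace_conjStarAlgAut]
  have htrace_add : (exp (A + B)).trace = (exp (Λ + W)).trace := by
    rw [← hAφ, ← hBφ, ← map_add, exp_conjStarAlgAut, trace_conjStarAlgAut]
  rw [htrace, htrace_mul, htrace_add]
  exact re_trace_exp_diagonal_mul_exp_le hA.eigenvalues (hB.isSelfAdjoint.map φ.symm)

end Peierls

section TransverseField

open NormedSpace

lemma exp_smul_of_mul_self_eq_one {𝔸 : Type*} [NormedRing 𝔸] [NormedAlgebra ℝ 𝔸]
    [CompleteSpace 𝔸] {x : 𝔸} (hx : x * x = 1) (t : ℝ) :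
    exp (t • x) = Real.cosh t • 1 + Real.sinh t • x := by
  have heven (k : ℕ) : x ^ (2 * k) = 1 := by rw [pow_mul, pow_two, hx, one_pow]
  refine (exp_series_hasSum_exp' (𝕂 := ℝ) (t • x)).unique (HasSum.even_add_odd ?_ ?_)
  · convert (Real.hasSum_cosh t).smul_const (1 : 𝔸) using 2 with k
    rw [smul_pow, heven, smul_smul, div_eq_inv_mul]
  · convert (Real.hasSum_sinh t).smul_const x using 2 with k
    rw [smul_pow, pow_succ x, heven, one_mul, smul_smul, div_eq_inv_mul]

open scoped Matrix.Norms.Operator in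
lemma matrix_exp_smul_of_mul_self_eq_one {n : Type*} [Fintype n] [DecidableEq n]
    {A : Matrix n n ℂ} (hA : A * A = 1) (t : ℝ) :
    exp (t • A) = Real.cosh t • 1 + Real.sinh t • A :=
  exp_smul_of_mul_self_eq_one hA t

variable {N : ℕ}

/-- The configuration obtained from `σ` by flipping the spin at site `j`. -/
def flipAt (σ : Conf N) (j : Fin N) : Conf N := Function.update σ j (1 - σ j)

lemma flipAt_apply_self_ne (σ : Conf N) (j : Fin N) : flipAt σ j j ≠ σ j := by
  rw [flipAt, Function.update_self]
  generalize σ j = s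
  decide +revert

lemma flipAt_apply_of_ne (σ : Conf N) {i j : Fin N} (hij : i ≠ j) : flipAt σ j i = σ i :=
  Function.update_of_ne hij _ _

lemma flipAt_flipAt (σ : Conf N) (j : Fin N) : flipAt (flipAt σ j) j = σ := by
  simp [flipAt]

lemma flipAt_comm (σ : Conf N) (i j : Fin N) : flipAt (flipAt σ i) j = flipAt (flipAt σ j) i := by
  obtain rfl | hij := eq_or_ne i j
  · rfl
  · simp only [flipAt, Function.update_of_ne hij, Function.update_of_ne hij.symm,
      Function.update_comm hij]

lemma Sx_apply (j : Fin N) (σ τ : Conf N) :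
    Sx N j σ τ = if τ = flipAt σ j then 1 else 0 := rfl

lemma Sx_mul_apply (j : Fin N) (M : Matrix (Conf N) (Conf N) ℂ) (σ τ : Conf N) :
    (Sx N j * M) σ τ = M (flipAt σ j) τ := by
  simp only [mul_apply, Sx_apply, ite_mul, one_mul, zero_mul, Finset.sum_ite_eq',
    Finset.mem_univ, if_true]

lemma Sx_mul_self (j : Fin N) : Sx N j * Sx N j = 1 := by
  ext σ τ
  rw [Sx_mul_apply, one_apply, Sx_apply, flipAt_flipAt]
  simp only [eq_comm]

lemma commute_Sx (i j : Fin N) : Commute (Sx N i) (Sx N j) := by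
  ext σ τ
  rw [Sx_mul_apply, Sx_mul_apply, Sx_apply, Sx_apply, flipAt_comm]

lemma Sx_isHermitian (j : Fin N) : (Sx N j).IsHermitian := by
  ext σ τ
  have hiff : σ = flipAt τ j ↔ τ = flipAt σ j :=
    ⟨fun h => by rw [h, flipAt_flipAt], fun h => by rw [h, flipAt_flipAt]⟩
  rw [conjTranspose_apply, Sx_apply, Sx_apply, if_congr hiff rfl rfl, apply_ite star, star_one,
    star_zero]

lemma exp_smul_sum_insert_Sx {s : Finset (Fin N)} {j : Fin N} (hj : j ∉ s) (d : ℝ)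
    (σ τ : Conf N) :
    exp (d • ∑ i ∈ insert j s, Sx N i) σ τ =
      Real.cosh d * exp (d • ∑ i ∈ s, Sx N i) σ τ +
        Real.sinh d * exp (d • ∑ i ∈ s, Sx N i) (flipAt σ j) τ := by
  have hcomm : Commute (d • Sx N j) (d • ∑ i ∈ s, Sx N i) :=
    ((Commute.sum_right _ _ _ fun i _ => commute_Sx j i).smul_left d).smul_right d
  rw [Finset.sum_insert hj, smul_add, Matrix.exp_add_of_commute _ _ hcomm,
    matrix_exp_smul_of_mul_self_eq_one (Sx_mul_self j), add_mul, smul_mul_assoc, one_mul,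
    smul_mul_assoc, Matrix.add_apply, Matrix.smul_apply, Matrix.smul_apply, Sx_mul_apply,
    Complex.real_smul, Complex.real_smul]

lemma exp_smul_sum_Sx_apply_eq_zero (s : Finset (Fin N)) (d : ℝ) {j : Fin N} (hj : j ∉ s)
    {σ τ : Conf N} (hστ : σ j ≠ τ j) : exp (d • ∑ i ∈ s, Sx N i) σ τ = 0 := by
  induction s using Finset.induction_on generalizing σ with
  | empty =>
    rw [Finset.sum_empty, smul_zero, exp_zero, one_apply_ne]
    exact fun h => hστ (congrFun h j)
  | insert i s hi ih =>
    rw [Finset.mem_insert, not_or] at hj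
    have hflip : flipAt σ i j ≠ τ j := by rwa [flipAt_apply_of_ne σ hj.1]
    rw [exp_smul_sum_insert_Sx hi, ih hj.2 hστ, ih hj.2 hflip, mul_zero, mul_zero, add_zero]

lemma exp_smul_sum_Sx_apply_self (s : Finset (Fin N)) (d : ℝ) (σ : Conf N) :
    exp (d • ∑ i ∈ s, Sx N i) σ σ = (Real.cosh d ^ s.card : ℝ) := by
  induction s using Finset.induction_on with
  | empty =>
    rw [Finset.sum_empty, smul_zero, exp_zero, one_apply_eq, Finset.card_empty, pow_zero,
      Complex.ofReal_one]
  | insert j s hj ih =>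
    rw [exp_smul_sum_insert_Sx hj, ih,
      exp_smul_sum_Sx_apply_eq_zero s d hj (flipAt_apply_self_ne σ j), mul_zero, add_zero,
      Finset.card_insert_of_notMem hj, pow_succ', Complex.ofReal_mul]

lemma smul_sum_Sx_isHermitian (d : ℝ) : (d • ∑ j, Sx N j).IsHermitian :=
  IsHermitian.smul (isSelfAdjoint_sum _ fun j _ => Sx_isHermitian j) (IsSelfAdjoint.all d)

lemma smul_sum_Sx_apply_self (d : ℝ) (σ : Conf N) : (d • ∑ j, Sx N j) σ σ = 0 := by
  rw [Matrix.smul_apply, Matrix.sum_apply, Finset.sum_eq_zero, smul_zero]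
  intro j _
  rw [Sx_apply, if_neg]
  exact fun h => flipAt_apply_self_ne σ j (congrFun h j).symm

lemma sum_exp_le_re_trace_exp_diagonal_add_smul_sum_Sx (D : Conf N → ℝ) (d : ℝ) :
    ∑ σ, Real.exp (D σ) ≤
      (exp (diagonal (fun σ => (D σ : ℂ)) + d • ∑ j, Sx N j)).trace.re := by
  have hdiag : (diagonal fun σ => (D σ : ℂ)).IsHermitian := diagonal_ofReal_isHermitian D
  simpa only [Matrix.add_apply, diagonal_apply_eq, smul_sum_Sx_apply_self, add_zero,
    RCLike.re_eq_complex_re, Complex.ofReal_re] using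
    sum_exp_re_apply_self_le_re_trace_exp (hdiag.add (smul_sum_Sx_isHermitian d))

lemma re_trace_exp_diagonal_add_smul_sum_Sx_le (D : Conf N → ℝ) (d : ℝ) :
    (exp (diagonal (fun σ => (D σ : ℂ)) + d • ∑ j, Sx N j)).trace.re ≤
      (∑ σ, Real.exp (D σ)) * Real.cosh d ^ N := by
  have hdiag : (diagonal fun σ => (D σ : ℂ)).IsHermitian := diagonal_ofReal_isHermitian D
  have hexp : exp (diagonal fun σ => (D σ : ℂ)) = diagonal fun σ => (Real.exp (D σ) : ℂ) :=
    exp_diagonal_ofReal D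
  refine (re_trace_exp_add_le hdiag (smul_sum_Sx_isHermitian d)).trans_eq ?_
  rw [hexp, Finset.sum_mul, trace, map_sum]
  refine Finset.sum_congr rfl fun σ _ => ?_
  rw [diag_apply, diagonal_mul, exp_smul_sum_Sx_apply_self, Finset.card_univ, Fintype.card_fin,
    RCLike.re_eq_complex_re, ← Complex.ofReal_mul, Complex.ofReal_re]

end TransverseField

section Gibbs

open NormedSpace

variable {n : Type*} [Fintype n] [DecidableEq n]

/-- The log-partition function `log Tr e^{-H}` of a Hamiltonian `H` at inverse temperature `1`. -/
def logPartition (H : Matrix n n ℂ) : ℝ := Real.log (exp (-H)).trace.re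

lemma gibbs_smul (β : ℝ) (H A : Matrix n n ℂ) (a : ℝ) : gibbs β H (a • A) = a * gibbs β H A := by
  rw [gibbs, gibbs, mul_smul_comm, trace_smul, smul_div_assoc, Complex.real_smul,
    Complex.re_ofReal_mul]

lemma trace_exp_eq_re {H : Matrix n n ℂ} (hH : H.IsHermitian) :
    (exp H).trace = ((exp H).trace.re : ℂ) := by
  rw [eq_comm, ← Complex.conj_eq_iff_re, starRingEnd_apply, ← trace_conjTranspose, hH.exp.eq]

theorem logPartition_sub_gibbs_le_logPartition_add [Nonempty n] {H A : Matrix n n ℂ}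
    (hH : H.IsHermitian) (hA : A.IsHermitian) :
    logPartition H - gibbs 1 H A ≤ logPartition (H + A) := by
  have hpos : 0 < (exp (-H)).trace.re := re_trace_exp_pos hH.neg
  have hgibbs : (exp (-H) * -A).trace.re / (exp (-H)).trace.re = -gibbs 1 H A := by
    rw [gibbs, neg_one_smul, trace_exp_eq_re hH.neg, Complex.ofReal_re, Complex.div_ofReal_re,
      mul_neg, trace_neg, Complex.neg_re, neg_div]
  have hPB : (exp (-H)).trace.re * Real.exp (-gibbs 1 H A) ≤ (exp (-(H + A))).trace.re := by
    rw [← hgibbs, neg_add]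
    exact re_trace_exp_mul_exp_le_re_trace_exp_add hH.neg hA.neg
  have hlog := Real.log_le_log (mul_pos hpos (Real.exp_pos _)) hPB
  rwa [Real.log_mul hpos.ne' (Real.exp_ne_zero _), Real.log_exp, ← sub_eq_add_neg] at hlog

end Gibbs

section SherringtonKirkpatrick

open NormedSpace

variable {N : ℕ}

/-- The unordered pairs of distinct sites, encoded as ordered pairs `j < k`. -/
abbrev SitePair (N : ℕ) := {q : Fin N × Fin N // q.1 < q.2}

/-- The spin of `σ` at site `j`: the eigenvalue `±1` of `Sz N j` at the basis vector `σ`. -/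
def spin (σ : Conf N) (j : Fin N) : ℝ := if σ j = 0 then 1 else -1

/-- The Sherrington–Kirkpatrick energy of a configuration: the eigenvalue of `UN N g` at `σ`. -/
def skEnergy (g : Fin N → Fin N → ℝ) (σ : Conf N) : ℝ :=
  -(1 / √N) * ∑ p : SitePair N, spin σ p.1.1 * spin σ p.1.2 * g p.1.1 p.1.2

/-- The log-partition function of the classical Sherrington–Kirkpatrick model at coupling `c`. -/
def skLogPartition (g : Fin N → Fin N → ℝ) (c : ℝ) : ℝ :=
  Real.log (∑ σ : Conf N, Real.exp (-c * skEnergy g σ))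

lemma sum_sitePair {M : Type*} [AddCommMonoid M] (f : Fin N → Fin N → M) :
    ∑ p : SitePair N, f p.1.1 p.1.2 = ∑ j, ∑ k, if j < k then f j k else 0 := by
  rw [← Fintype.sum_prod_type', ← Finset.sum_filter]
  exact (Finset.sum_subtype _ (by simp) fun q : Fin N × Fin N => f q.1 q.2).symm

lemma Sz_eq_diagonal_spin (j : Fin N) : Sz N j = diagonal fun σ => (spin σ j : ℂ) := by
  rw [Sz]
  congr 1 with σ
  rw [spin]
  split_ifs <;> simp

lemma UN_eq_diagonal_skEnergy (g : Fin N → Fin N → ℝ) :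
    UN N g = diagonal fun σ => (skEnergy g σ : ℂ) := by
  rw [UN, ← sum_sitePair fun j k => g j k • (Sz N j * Sz N k)]
  simp only [Sz_eq_diagonal_spin, diagonal_mul_diagonal]
  ext σ τ
  obtain rfl | h := eq_or_ne σ τ
  · simp [Matrix.sum_apply, skEnergy, mul_comm]
  · simp [Matrix.sum_apply, h]

lemma UN_isHermitian (g : Fin N → Fin N → ℝ) : (UN N g).IsHermitian := by
  rw [UN_eq_diagonal_skEnergy]
  exact diagonal_ofReal_isHermitian _

lemma neg_HN_eq (c d : ℝ) (g : Fin N → Fin N → ℝ) :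
    -HN N c d g = diagonal (fun σ => ((-c * skEnergy g σ : ℝ) : ℂ)) + d • ∑ j, Sx N j := by
  rw [HN, UN_eq_diagonal_skEnergy, neg_sub, sub_eq_add_neg, add_comm, ← neg_smul, ← diagonal_smul]
  congr 2 with σ
  rw [Pi.smul_apply, Complex.real_smul, Complex.ofReal_mul]

lemma HN_isHermitian (c d : ℝ) (g : Fin N → Fin N → ℝ) : (HN N c d g).IsHermitian :=
  ((UN_isHermitian g).smul (IsSelfAdjoint.all c)).sub (smul_sum_Sx_isHermitian d)

lemma HN_add (c a d : ℝ) (g : Fin N → Fin N → ℝ) :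
    HN N (c + a) d g = HN N c d g + a • UN N g := by
  rw [HN, HN, add_smul, sub_add_eq_add_sub]

lemma sum_exp_skEnergy_pos (g : Fin N → Fin N → ℝ) (c : ℝ) :
    0 < ∑ σ, Real.exp (-c * skEnergy g σ) :=
  Finset.sum_pos (fun _ _ => Real.exp_pos _) Finset.univ_nonempty

lemma skLogPartition_le_logPartition (g : Fin N → Fin N → ℝ) (c d : ℝ) :
    skLogPartition g c ≤ logPartition (HN N c d g) := by
  rw [skLogPartition, logPartition, neg_HN_eq]
  exact Real.log_le_log (sum_exp_skEnergy_pos g c)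
    (sum_exp_le_re_trace_exp_diagonal_add_smul_sum_Sx _ d)

lemma logPartition_le_skLogPartition_add (g : Fin N → Fin N → ℝ) (c d : ℝ) :
    logPartition (HN N c d g) ≤ skLogPartition g c + N * Real.log (Real.cosh d) := by
  have hpos : 0 < (exp (-HN N c d g)).trace.re := re_trace_exp_pos (HN_isHermitian c d g).neg
  rw [neg_HN_eq] at hpos
  rw [skLogPartition, logPartition, neg_HN_eq, ← Real.log_pow,
    ← Real.log_mul (sum_exp_skEnergy_pos g c).ne' (pow_pos (Real.cosh_pos d) N).ne']
  exact Real.log_le_log hpos (re_trace_exp_diagonal_add_smul_sum_Sx_le _ d)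

theorem skLogPartition_sub_le_mul_gibbs (g : Fin N → Fin N → ℝ) (c d a : ℝ) :
    skLogPartition g c - skLogPartition g (c + a) - N * Real.log (Real.cosh d) ≤
      a * gibbs 1 (HN N c d g) (UN N g) := by
  have hPB := logPartition_sub_gibbs_le_logPartition_add (HN_isHermitian c d g)
    ((UN_isHermitian g).smul (IsSelfAdjoint.all a))
  rw [gibbs_smul, ← HN_add] at hPB
  linarith [skLogPartition_le_logPartition g c d, logPartition_le_skLogPartition_add g (c + a) d]

theorem gibbs_zero_field_le (g : Fin N → Fin N → ℝ) (c d : ℝ) {a : ℝ} (ha : 0 < a) :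
    gibbs 1 (HN N (c + a) 0 g) (UN N g) ≤
      gibbs 1 (HN N c d g) (UN N g) + N * (a⁻¹ * Real.log (Real.cosh d)) := by
  have hquantum := skLogPartition_sub_le_mul_gibbs g c d a
  have hclassical := skLogPartition_sub_le_mul_gibbs g (c + a) 0 (-a)
  rw [Real.cosh_zero, Real.log_one, mul_zero, sub_zero, add_neg_cancel_right] at hclassical
  refine le_of_mul_le_mul_left ?_ ha
  rw [mul_add, mul_left_comm a, mul_inv_cancel_left₀ ha.ne']
  linarith

end SherringtonKirkpatrick

section ClassicalBounds

variable {N : ℕ}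

lemma spin_flipAt_self (σ : Conf N) (j : Fin N) : spin (flipAt σ j) j = -spin σ j := by
  rw [spin, spin, flipAt, Function.update_self]
  generalize σ j = s
  fin_cases s <;> simp

lemma spin_flipAt_of_ne (σ : Conf N) {j k : Fin N} (hkj : k ≠ j) :
    spin (flipAt σ j) k = spin σ k := by
  rw [spin, spin, flipAt_apply_of_ne σ hkj]

lemma spin_mul_self (σ : Conf N) (j : Fin N) : spin σ j * spin σ j = 1 := by
  rw [spin]
  split_ifs <;> norm_num

lemma sum_spin_mul_spin {j k : Fin N} (hjk : j ≠ k) :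
    ∑ σ : Conf N, spin σ j * spin σ k = 0 := by
  have hflip : ∑ σ : Conf N, spin (flipAt σ j) j * spin (flipAt σ j) k =
      ∑ σ : Conf N, spin σ j * spin σ k :=
    Function.Bijective.sum_comp (Function.Involutive.bijective fun σ => flipAt_flipAt σ j)
      fun σ => spin σ j * spin σ k
  simp only [spin_flipAt_self, spin_flipAt_of_ne _ hjk.symm, neg_mul,
    Finset.sum_neg_distrib] at hflip
  linarith

lemma sum_skEnergy (g : Fin N → Fin N → ℝ) : ∑ σ, skEnergy g σ = 0 := by
  simp only [skEnergy]
  rw [← Finset.mul_sum, Finset.sum_comm, Finset.sum_eq_zero, mul_zero]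
  intro p _
  rw [← Finset.sum_mul, sum_spin_mul_spin p.2.ne, zero_mul]

theorem mul_log_two_le_skLogPartition (g : Fin N → Fin N → ℝ) (c : ℝ) :
    N * Real.log 2 ≤ skLogPartition g c := by
  rw [skLogPartition, ← Real.log_pow]
  refine Real.log_le_log (by positivity) ?_
  calc (2 : ℝ) ^ N = ∑ σ, (-c * skEnergy g σ + 1) := by
        rw [Finset.sum_add_distrib, ← Finset.mul_sum, sum_skEnergy]
        simp
    _ ≤ ∑ σ, Real.exp (-c * skEnergy g σ) :=
        Finset.sum_le_sum fun σ _ => Real.add_one_le_exp _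

end ClassicalBounds

section GibbsContinuity

open NormedSpace

open scoped Matrix.Norms.Operator in
lemma continuous_matrix_exp {n : Type*} [Fintype n] [DecidableEq n] :
    Continuous (exp : Matrix n n ℂ → Matrix n n ℂ) := by
  let _ : NormedAlgebra ℚ (Matrix n n ℂ) := NormedAlgebra.restrictScalars ℚ ℂ _
  exact exp_continuous

lemma continuous_gibbs {X n : Type*} [TopologicalSpace X] [Fintype n] [DecidableEq n] [Nonempty n]
    (β : ℝ) {H A : X → Matrix n n ℂ} (hH : Continuous H) (hA : Continuous A)
    (hherm : ∀ x, (H x).IsHermitian) : Continuous fun x => gibbs β (H x) (A x) := by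
  have hexp : Continuous fun x => exp (-β • H x) := continuous_matrix_exp.comp (hH.fun_const_smul _)
  have hne (x : X) : (exp (-β • H x)).trace ≠ 0 := by
    have hpos : 0 < (exp (-β • H x)).trace.re :=
      re_trace_exp_pos ((hherm x).smul (IsSelfAdjoint.all (-β)))
    exact fun h => hpos.ne' (by rw [h, Complex.zero_re])
  exact Complex.continuous_re.comp ((hexp.mul hA).matrix_trace.div hexp.matrix_trace hne)

end GibbsContinuity

section Disorder

variable {Ω : Type*} [MeasurableSpace Ω] {μ : Measure Ω}

lemma integral_log_le_log_of_integral_le [IsProbabilityMeasure μ] {f : Ω → ℝ} {m : ℝ}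
    (hpos : ∀ ω, 0 < f ω) (hm : 0 < m) (hint : Integrable f μ)
    (hlog : Integrable (fun ω => Real.log (f ω)) μ) (hle : ∫ ω, f ω ∂μ ≤ m) :
    ∫ ω, Real.log (f ω) ∂μ ≤ Real.log m := by
  have htangent (ω : Ω) : Real.log (f ω) ≤ f ω / m + (Real.log m - 1) := by
    have h := Real.log_le_sub_one_of_pos (div_pos (hpos ω) hm)
    rw [Real.log_div (hpos ω).ne' hm.ne'] at h
    linarith
  calc ∫ ω, Real.log (f ω) ∂μ ≤ ∫ ω, (f ω / m + (Real.log m - 1)) ∂μ :=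
        integral_mono hlog ((hint.div_const m).add (integrable_const _)) htangent
    _ = (∫ ω, f ω ∂μ) / m + (Real.log m - 1) := by
        rw [integral_add (hint.div_const m) (integrable_const _), integral_div, integral_const,
          probReal_univ, one_smul]
    _ ≤ Real.log m := by linarith [(div_le_one hm).mpr hle]

lemma hasSubgaussianMGF_const_mul {X : Ω → ℝ} {v w : NNReal} (h : HasSubgaussianMGF X v μ) {r : ℝ}
    (hvw : r ^ 2 * v ≤ w) : HasSubgaussianMGF (fun ω => r * X ω) w μ where
  integrable_exp_mul t := by
    simpa only [mul_assoc] using h.integrable_exp_mul (t * r)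
  mgf_le t := by
    rw [mgf_const_mul]
    refine (h.mgf_le (r * t)).trans (Real.exp_le_exp.mpr ?_)
    rw [mul_pow, ← mul_assoc, mul_comm (v : ℝ)]
    gcongr

lemma hasSubgaussianMGF_of_map_eq_gaussianReal {X : Ω → ℝ} {v : NNReal}
    (hX : AEMeasurable X μ) (h : μ.map X = gaussianReal 0 v) : HasSubgaussianMGF X v μ := by
  rw [← HasSubgaussianMGF.id_map_iff hX, h]
  refine ⟨integrable_exp_mul_gaussianReal, fun t => ?_⟩
  rw [mgf_id_gaussianReal]
  simp only [zero_mul, zero_add, le_refl]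

variable {N : ℕ}

theorem hasSubgaussianMGF_skEnergy {g : Ω → Fin N → Fin N → ℝ} {v : NNReal}
    (hsub : ∀ p : SitePair N, HasSubgaussianMGF (fun ω => g ω p.1.1 p.1.2) v μ)
    (hindep : iIndepFun (fun (p : SitePair N) ω => g ω p.1.1 p.1.2) μ) (σ : Conf N) :
    HasSubgaussianMGF (fun ω => skEnergy (g ω) σ) (N * v) μ := by
  have hterm (p : SitePair N) :
      HasSubgaussianMGF (fun ω => spin σ p.1.1 * spin σ p.1.2 * g ω p.1.1 p.1.2) v μ := by
    have hsq : (spin σ p.1.1 * spin σ p.1.2) ^ 2 = 1 := by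
      rw [mul_pow, sq, sq, spin_mul_self, spin_mul_self, one_mul]
    exact hasSubgaussianMGF_const_mul (hsub p) (by rw [hsq, one_mul])
  have hsum := HasSubgaussianMGF.sum_of_iIndepFun (s := Finset.univ)
    (hindep.comp (fun p x => spin σ p.1.1 * spin σ p.1.2 * x) fun p => measurable_const_mul _)
    fun p _ => hterm p
  have hcard : (Fintype.card (SitePair N) : ℝ) ≤ N * N := by
    exact_mod_cast (Fintype.card_subtype_le _).trans_eq (by simp)
  refine hasSubgaussianMGF_const_mul hsum ?_
  rw [Finset.sum_const, Finset.card_univ, nsmul_eq_mul]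
  push_cast
  rw [← mul_assoc, neg_sq, div_pow, Real.sq_sqrt (Nat.cast_nonneg N), one_pow, one_div]
  gcongr
  exact inv_mul_le_of_le_mul₀ (Nat.cast_nonneg N) (Nat.cast_nonneg N) hcard

variable {g : Ω → Fin N → Fin N → ℝ} {v : NNReal}

lemma integrable_sum_exp_skEnergy
    (hE : ∀ σ, HasSubgaussianMGF (fun ω => skEnergy (g ω) σ) (N * v) μ) (c : ℝ) :
    Integrable (fun ω => ∑ σ, Real.exp (-c * skEnergy (g ω) σ)) μ :=
  integrable_finsetSum _ fun σ _ => (hE σ).integrable_exp_mul (-c)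

lemma integral_sum_exp_skEnergy_le
    (hE : ∀ σ, HasSubgaussianMGF (fun ω => skEnergy (g ω) σ) (N * v) μ) (c : ℝ) :
    ∫ ω, ∑ σ, Real.exp (-c * skEnergy (g ω) σ) ∂μ ≤ 2 ^ N * Real.exp (N * (v * c ^ 2 / 2)) := by
  rw [integral_finsetSum _ fun σ _ => (hE σ).integrable_exp_mul (-c)]
  refine (Finset.sum_le_card_nsmul _ _ (Real.exp (N * (v * c ^ 2 / 2))) fun σ _ => ?_).trans_eq ?_
  · refine ((hE σ).mgf_le (-c)).trans_eq ?_
    rw [NNReal.coe_mul, NNReal.coe_natCast, neg_sq, mul_assoc, mul_div_assoc]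
  · simp

lemma aestronglyMeasurable_gibbs
    (hE : ∀ σ, AEMeasurable (fun ω => skEnergy (g ω) σ) μ) (c d : ℝ) :
    AEStronglyMeasurable (fun ω => gibbs 1 (HN N c d (g ω)) (UN N (g ω))) μ := by
  have hU : Continuous fun D : Conf N → ℝ => diagonal fun σ => (D σ : ℂ) := by fun_prop
  have hcont : Continuous fun D : Conf N → ℝ =>
      gibbs 1 (c • diagonal (fun σ => (D σ : ℂ)) - d • ∑ j, Sx N j)
        (diagonal fun σ => (D σ : ℂ)) :=
    continuous_gibbs 1 ((hU.fun_const_smul c).sub continuous_const) hU fun D =>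
      ((diagonal_ofReal_isHermitian D).smul (IsSelfAdjoint.all c)).sub (smul_sum_Sx_isHermitian d)
  simp only [HN, UN_eq_diagonal_skEnergy]
  exact hcont.comp_aestronglyMeasurable (aemeasurable_pi_lambda _ hE).aestronglyMeasurable

lemma gibbs_le (g : Fin N → Fin N → ℝ) (c d : ℝ) :
    gibbs 1 (HN N c d g) (UN N g) ≤
      skLogPartition g (c - 1) - N * Real.log 2 + N * Real.log (Real.cosh d) := by
  have h := skLogPartition_sub_le_mul_gibbs g c d (-1)
  rw [← sub_eq_add_neg] at h
  linarith [mul_log_two_le_skLogPartition g c]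

lemma le_gibbs (g : Fin N → Fin N → ℝ) (c d : ℝ) :
    N * Real.log 2 - skLogPartition g (c + 1) - N * Real.log (Real.cosh d) ≤
      gibbs 1 (HN N c d g) (UN N g) := by
  have h := skLogPartition_sub_le_mul_gibbs g c d 1
  linarith [mul_log_two_le_skLogPartition g c]

variable [IsProbabilityMeasure μ]

lemma integrable_skLogPartition
    (hE : ∀ σ, HasSubgaussianMGF (fun ω => skEnergy (g ω) σ) (N * v) μ) (c : ℝ) :
    Integrable (fun ω => skLogPartition (g ω) c) μ := by
  refine integrable_of_le_of_le
    (integrable_sum_exp_skEnergy hE c).aemeasurable.log.aestronglyMeasurable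
    (.of_forall fun ω => mul_log_two_le_skLogPartition (g ω) c)
    (.of_forall fun ω => Real.log_le_self (sum_exp_skEnergy_pos (g ω) c).le)
    (integrable_const _) (integrable_sum_exp_skEnergy hE c)

theorem integral_skLogPartition_le
    (hE : ∀ σ, HasSubgaussianMGF (fun ω => skEnergy (g ω) σ) (N * v) μ) (c : ℝ) :
    ∫ ω, skLogPartition (g ω) c ∂μ ≤ N * Real.log 2 + N * (v * c ^ 2 / 2) := by
  have hmean := integral_log_le_log_of_integral_le (fun ω => sum_exp_skEnergy_pos (g ω) c)
    (by positivity) (integrable_sum_exp_skEnergy hE c) (integrable_skLogPartition hE c)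
    (integral_sum_exp_skEnergy_le hE c)
  rwa [Real.log_mul (by positivity) (Real.exp_ne_zero _), Real.log_pow, Real.log_exp] at hmean

lemma integrable_gibbs
    (hE : ∀ σ, HasSubgaussianMGF (fun ω => skEnergy (g ω) σ) (N * v) μ) (c d : ℝ) :
    Integrable (fun ω => gibbs 1 (HN N c d (g ω)) (UN N (g ω))) μ :=
  integrable_of_le_of_le (aestronglyMeasurable_gibbs (fun σ => (hE σ).aemeasurable) c d)
    (.of_forall fun ω => le_gibbs (g ω) c d) (.of_forall fun ω => gibbs_le (g ω) c d)
    (((integrable_const _).sub (integrable_skLogPartition hE _)).sub (integrable_const _))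
    (((integrable_skLogPartition hE _).sub (integrable_const _)).add (integrable_const _))

theorem abs_integral_gibbs_le
    (hE : ∀ σ, HasSubgaussianMGF (fun ω => skEnergy (g ω) σ) (N * v) μ) (c d : ℝ) :
    |∫ ω, gibbs 1 (HN N c d (g ω)) (UN N (g ω)) ∂μ| ≤
      N * (v * (|c| + 1) ^ 2 / 2 + Real.log (Real.cosh d)) := by
  have hbound (x : ℝ) (hx : |x| ≤ |c| + 1) :
      ∫ ω, skLogPartition (g ω) x ∂μ ≤ N * Real.log 2 + N * (v * (|c| + 1) ^ 2 / 2) := by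
    have hsq : x ^ 2 ≤ (|c| + 1) ^ 2 := sq_le_sq' (abs_le.mp hx).1 (abs_le.mp hx).2
    exact (integral_skLogPartition_le hE x).trans (by gcongr)
  have hint (x : ℝ) := integrable_skLogPartition hE x
  have hlower : N * Real.log 2 - ∫ ω, skLogPartition (g ω) (c + 1) ∂μ -
      N * Real.log (Real.cosh d) ≤ ∫ ω, gibbs 1 (HN N c d (g ω)) (UN N (g ω)) ∂μ := by
    have h := integral_mono (((integrable_const _).sub (hint _)).sub (integrable_const _))
      (integrable_gibbs hE c d) fun ω => le_gibbs (g ω) c d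
    rwa [integral_sub' ((integrable_const _).sub (hint _)) (integrable_const _),
      integral_sub' (integrable_const _) (hint _), integral_const, integral_const, probReal_univ,
      one_smul, one_smul] at h
  have hupper : ∫ ω, gibbs 1 (HN N c d (g ω)) (UN N (g ω)) ∂μ ≤
      ∫ ω, skLogPartition (g ω) (c - 1) ∂μ - N * Real.log 2 + N * Real.log (Real.cosh d) := by
    have h := integral_mono (integrable_gibbs hE c d)
      (((hint _).sub (integrable_const _)).add (integrable_const _)) fun ω => gibbs_le (g ω) c d
    rwa [integral_add' ((hint _).sub (integrable_const _)) (integrable_const _),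
      integral_sub' (hint _) (integrable_const _), integral_const, integral_const, probReal_univ,
      one_smul, one_smul] at h
  have hplus : |c + 1| ≤ |c| + 1 := (abs_add_le c 1).trans_eq (by rw [abs_one])
  have hminus : |c - 1| ≤ |c| + 1 := (abs_sub c 1).trans_eq (by rw [abs_one])
  rw [mul_add, abs_le]
  constructor <;> linarith [hbound _ hplus, hbound _ hminus]

lemma abs_integral_gibbs_div_le
    (hE : ∀ σ, HasSubgaussianMGF (fun ω => skEnergy (g ω) σ) (N * v) μ) (c d : ℝ) :
    |(∫ ω, gibbs 1 (HN N c d (g ω)) (UN N (g ω)) ∂μ) / N| ≤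
      v * (|c| + 1) ^ 2 / 2 + Real.log (Real.cosh d) := by
  have hlog : 0 ≤ Real.log (Real.cosh d) := Real.log_nonneg (Real.one_le_cosh d)
  rw [abs_div, Nat.abs_cast]
  exact div_le_of_le_mul₀ (Nat.cast_nonneg N) (by positivity)
    ((abs_integral_gibbs_le hE c d).trans_eq (mul_comm _ _))

theorem integral_gibbs_zero_field_div_le
    (hE : ∀ σ, HasSubgaussianMGF (fun ω => skEnergy (g ω) σ) (N * v) μ) (c d : ℝ)
    {a : ℝ} (ha : 0 < a) :
    (∫ ω, gibbs 1 (HN N (c + a) 0 (g ω)) (UN N (g ω)) ∂μ) / N ≤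
      (∫ ω, gibbs 1 (HN N c d (g ω)) (UN N (g ω)) ∂μ) / N + a⁻¹ * Real.log (Real.cosh d) := by
  have hmean : ∫ ω, gibbs 1 (HN N (c + a) 0 (g ω)) (UN N (g ω)) ∂μ ≤
      ∫ ω, gibbs 1 (HN N c d (g ω)) (UN N (g ω)) ∂μ + N * (a⁻¹ * Real.log (Real.cosh d)) := by
    refine (integral_mono (integrable_gibbs hE _ _)
      ((integrable_gibbs hE c d).add (integrable_const _))
      fun ω => gibbs_zero_field_le (g ω) c d ha).trans_eq ?_
    rw [integral_add' (integrable_gibbs hE c d) (integrable_const _), integral_const,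
      probReal_univ, one_smul]
  have hlog : 0 ≤ Real.log (Real.cosh d) := Real.log_nonneg (Real.one_le_cosh d)
  rw [← sub_le_iff_le_add', ← sub_div]
  refine div_le_of_le_mul₀ (Nat.cast_nonneg N) (by positivity) ?_
  linarith

end Disorder

lemma liminf_le_liminf_add_const {ι : Type*} {F : Filter ι} [F.NeBot] {u w : ι → ℝ} {K L r : ℝ}
    (hu : ∀ i, K ≤ u i) (hw : ∀ i, |w i| ≤ L) (h : ∀ i, u i ≤ w i + r) :
    Filter.liminf u F ≤ Filter.liminf w F + r := by
  have hw_below : F.IsBoundedUnder (· ≥ ·) w :=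
    Filter.isBoundedUnder_of ⟨-L, fun i => (abs_le.mp (hw i)).1⟩
  have hw_above : F.IsBoundedUnder (· ≤ ·) w :=
    Filter.isBoundedUnder_of ⟨L, fun i => (abs_le.mp (hw i)).2⟩
  have hwr_above : F.IsBoundedUnder (· ≤ ·) fun i => w i + r :=
    Filter.isBoundedUnder_of ⟨L + r, fun i => add_le_add_left (abs_le.mp (hw i)).2 r⟩
  rw [← liminf_add_const _ _ _ hw_above.isCoboundedUnder_ge hw_below]
  exact Filter.liminf_le_liminf (.of_forall h) (Filter.isBoundedUnder_of ⟨K, hu⟩)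
    hwr_above.isCoboundedUnder_ge

theorem stmt14_general {Ω : Type*} [MeasurableSpace Ω] {μ : Measure Ω}
    {g : (N : ℕ) → Ω → Fin N → Fin N → ℝ} {v : NNReal}
    (hsub : ∀ (N : ℕ) (p : SitePair N), HasSubgaussianMGF (fun ω => g N ω p.1.1 p.1.2) v μ)
    (hindep : ∀ N : ℕ, iIndepFun (fun (p : SitePair N) ω => g N ω p.1.1 p.1.2) μ)
    (c d : ℝ) {a : ℝ} (ha : 0 < a) :
    ubar μ g c d + a⁻¹ * Real.log (Real.cosh d) ≥ ubar μ g (c + a) 0 := by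
  have := (hindep 0).isProbabilityMeasure
  have hE (N : ℕ) := hasSubgaussianMGF_skEnergy (hsub N) (hindep N)
  exact liminf_le_liminf_add_const
    (fun N => (abs_le.mp (abs_integral_gibbs_div_le (hE N) (c + a) 0)).1)
    (fun N => abs_integral_gibbs_div_le (hE N) c d)
    fun N => integral_gibbs_zero_field_div_le (hE N) c d ha

theorem stmt14
    {Ω : Type*} [MeasurableSpace Ω] (μ : Measure Ω) [IsProbabilityMeasure μ]
    (β J b : ℝ) (hβ : 0 < β) (hJ : 0 < J) (hb : 0 ≤ b)
    (g : (N : ℕ) → Ω → Fin N → Fin N → ℝ)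
    (hmeas : ∀ (N : ℕ) (j k : Fin N), Measurable fun ω => g N ω j k)
    (hgauss : ∀ (N : ℕ) (j k : Fin N), j < k →
      Measure.map (fun ω => g N ω j k) μ = gaussianReal 0 1)
    (hindep : ∀ N : ℕ, iIndepFun
      (fun (p : {q : Fin N × Fin N // q.1 < q.2}) ω => g N ω p.1.1 p.1.2) μ)
    (a : ℝ) (ha : 0 < a) :
    ubar μ g (β * J) (β * b) + a⁻¹ * Real.log (Real.cosh (β * b))
      ≥ ubar μ g (β * J + a) 0 :=
  stmt14_general (fun N p => hasSubgaussianMGF_of_map_eq_gaussianReal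
    (hmeas N p.1.1 p.1.2).aemeasurable (hgauss N _ _ p.2)) hindep (β * J) (β * b) ha
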